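/- There exist triangulated categories T₁ and T₂, a full subcategory A ⊆ T₁ spanned by a full strong exceptional sequence, and exact (triangulated) functors F, G: T₁ → T₂ such that the restrictions F|_A and G|_A are isomorphic functors, but F and G are not isomorphic as exact functors. -/

import Mathlib

namespace P19

open CategoryTheory Limits

/-- A (`k`-linear) triangulated category, packaged. -/
structure TriCat (k : Type) [Field k] where
  C : Type
  [cat : Category.{0} C]
  [pre : Preadditive C]
  [lin : CategoryTheory.Linear k C]
  [hz : HasZeroObject C]
  [hs : HasShift C ℤ]
  [sa : ∀ n : ℤ, (shiftFunctor C n).Additive]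
  [tri : Pretriangulated C]

attribute [instance] TriCat.cat TriCat.pre TriCat.lin TriCat.hz TriCat.hs
  TriCat.sa TriCat.tri

/-- A sequence `E₁, …, E_n` is a full strong exceptional sequence:
`End(E_i) = k`, `Hom(E_i, E_j[l]) = 0` for all `l` whenever `i > j`,
`Hom(E_i, E_j[l]) = 0` for `l ≠ 0`, and the only triangulated subcategory
containing all the `E_i` is the whole category. -/
def FullStrongExceptional (k : Type) [Field k] (T : TriCat k) {n : ℕ}
    (Es : Fin n → T.C) : Prop :=
  (∀ i, ∀ φ : Es i ⟶ Es i, ∃ c : k, φ = c • 𝟙 (Es i)) ∧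
  (∀ i j : Fin n, j < i → ∀ (l : ℤ) (φ : Es i ⟶ (Es j)⟦l⟧), φ = 0) ∧
  (∀ (i j : Fin n) (l : ℤ), l ≠ 0 → ∀ φ : Es i ⟶ (Es j)⟦l⟧, φ = 0) ∧
  (∀ S : ObjectProperty T.C, S.IsTriangulated → (∀ i, S (Es i)) → ∀ X : T.C, S X)

/-!
Let `A₀ ⟶ A₁ ⟶ A₂` be the universal chain, regarded as complexes in degree zero in the homotopy
category of the free `k`-linear additive category on `Fin 3`, and let `S` be the cone of `A₁ ⟶ A₂`.
The mutation `A₀, A₂, S` of the strong exceptional sequence `A₀, A₁, A₂` is again a strong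
exceptional sequence. Its nonzero morphisms between different objects are the multiples of
`β : A₀ ⟶ A₂` and `γ : A₂ ⟶ S`, with `γβ = 0`, so that it realizes the quiver `A ⟶ B ⟶ C` with this
relation. The object `A₁` is the fibre of `γ`, and `u : A₀ ⟶ A₁` is the lift of `β` given by a
homotopy `γβ ≃ 0`.

For an endomorphism `m : X ⟶ X`, the diagram `X ⟶ X ⟶ 0` with first map `m` extends to an exact
functor taking `A₀, A₂, S` to `X, 0, X⟦1⟧` and `u` to `m`: the homotopy `γβ ≃ 0` is taken to the
degree `-1` morphism from `X` to `X⟦1⟧` given by `m`. On the exceptional sequence both `β` and `γ`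
are sent to zero, so the choice of `m` is invisible there. The image of `u` distinguishes `m = 𝟙 X`
from `m = 0`.
-/

open Pretriangulated ZeroObject

noncomputable section

universe v u v' u' w

section PretriangulatedOfEquivalence

variable {C : Type u} [Category.{v} C] {D : Type u'} [Category.{v'} D]

lemma isLocalization_inverseImage_isomorphisms (L : C ⥤ D) [L.IsEquivalence] :
    L.IsLocalization ((MorphismProperty.isomorphisms D).inverseImage L) :=
  L.asEquivalence.toAdjunction.isLocalization_leftAdjoint'

lemma hasLeftCalculusOfFractions_inverseImage_isomorphisms (L : C ⥤ D) [L.IsEquivalence] :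
    ((MorphismProperty.isomorphisms D).inverseImage L).HasLeftCalculusOfFractions :=
  L.asEquivalence.toAdjunction.hasLeftCalculusOfFractions'

variable [Preadditive C] [HasZeroObject C] [HasShift C ℤ]
  [∀ n : ℤ, (shiftFunctor C n).Additive] [Pretriangulated C]

lemma isCompatibleWithTriangulation_inverseImage_isomorphisms (L : C ⥤ D)
    [L.ReflectsIsomorphisms] :
    ((MorphismProperty.isomorphisms D).inverseImage L).IsCompatibleWithTriangulation := by
  have iff {X Y : C} (f : X ⟶ Y) : (MorphismProperty.isomorphisms D).inverseImage L f ↔ IsIso f :=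
    isIso_iff_of_reflects_iso f L
  refine { condition := fun a ↦ ?_, compatible_with_triangulation := ?_ }
  · ext X Y f
    simp only [MorphismProperty.inverseImage_iff _ (shiftFunctor C a), iff,
      isIso_iff_of_reflects_iso]
  · intro T₁ T₂ hT₁ hT₂ a b ha hb comm
    rw [iff] at ha hb
    obtain ⟨c, hc₂, hc₃⟩ := complete_distinguished_triangle_morphism _ _ hT₁ hT₂ a b comm
    have hc : IsIso c :=
      isIso₃_of_isIso₁₂ (Triangle.homMk T₁ T₂ a b c comm hc₂ hc₃) hT₁ hT₂ ha hb
    exact ⟨c, (iff c).2 hc, hc₂, hc₃⟩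

attribute [local instance] isLocalization_inverseImage_isomorphisms
  hasLeftCalculusOfFractions_inverseImage_isomorphisms
  isCompatibleWithTriangulation_inverseImage_isomorphisms

variable [Preadditive D] [HasZeroObject D] [HasShift D ℤ]
  [∀ n : ℤ, (shiftFunctor D n).Additive]
  (e : D ≌ C) [e.functor.Additive] [e.functor.CommShift ℤ]

/-- The pretriangulated structure transported along an equivalence `e : D ≌ C` commuting with
shifts, obtained by regarding `e.inverse` as the localization of `C` at the isomorphisms. -/
@[reducible]
def pretriangulatedOfEquivalence : Pretriangulated D :=
  letI := e.commShiftInverse ℤ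
  Triangulated.Localization.pretriangulated e.inverse
    ((MorphismProperty.isomorphisms D).inverseImage e.inverse)

lemma isTriangulated_functor_of_equivalence :
    let := pretriangulatedOfEquivalence e
    e.functor.IsTriangulated := by
  let := pretriangulatedOfEquivalence e
  let := e.commShiftInverse ℤ
  have := e.commShift_of_functor ℤ
  have : e.inverse.IsTriangulated := Triangulated.Localization.isTriangulated_functor e.inverse
    ((MorphismProperty.isomorphisms D).inverseImage e.inverse)
  exact (Equivalence.IsTriangulated.mk'' e this).leftAdjoint_isTriangulated

end PretriangulatedOfEquivalence

section Skeleton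

variable (C : Type u) [Category.{v} C]

instance [Preadditive C] : Preadditive (Skeleton C) :=
  inferInstanceAs (Preadditive (InducedCategory C Quotient.out))

instance [Preadditive C] : (fromSkeleton C).Additive where

instance [Preadditive C] : (skeletonEquivalence C).functor.Additive :=
  inferInstanceAs (fromSkeleton C).Additive

instance {k : Type w} [Semiring k] [Preadditive C] [Linear k C] : Linear k (Skeleton C) :=
  inferInstanceAs (Linear k (InducedCategory C Quotient.out))

instance {k : Type w} [Semiring k] [Preadditive C] [Linear k C] : (fromSkeleton C).Linear k where

instance [Preadditive C] : (toSkeletonFunctor C).Additive :=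
  inferInstanceAs (skeletonEquivalence C).inverse.Additive

instance [Preadditive C] [HasZeroObject C] : HasZeroObject (Skeleton C) :=
  (toSkeletonFunctor C).hasZeroObject_of_additive

variable [HasShift C ℤ]

/-- The shift functors of a skeleton, transported from the ambient category. -/
def skeletonShift (n : ℤ) : Skeleton C ⥤ Skeleton C :=
  fromSkeleton C ⋙ shiftFunctor C n ⋙ toSkeletonFunctor C

/-- The compatibility of `skeletonShift` with the inclusion of the skeleton. -/
def skeletonShiftIso (n : ℤ) :
    skeletonShift C n ⋙ fromSkeleton C ≅ fromSkeleton C ⋙ shiftFunctor C n :=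
  Functor.isoWhiskerLeft (fromSkeleton C ⋙ shiftFunctor C n) (skeletonEquivalence C).counitIso

instance : HasShift (Skeleton C) ℤ :=
  (Functor.FullyFaithful.ofFullyFaithful (fromSkeleton C)).hasShift _ (skeletonShiftIso C)

instance : (fromSkeleton C).CommShift ℤ :=
  Functor.CommShift.ofHasShiftOfFullyFaithful _ _ (skeletonShiftIso C)

instance : (skeletonEquivalence C).functor.CommShift ℤ :=
  inferInstanceAs ((fromSkeleton C).CommShift ℤ)

variable [Preadditive C] [∀ n : ℤ, (shiftFunctor C n).Additive]

instance (n : ℤ) : (shiftFunctor (Skeleton C) n).Additive :=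
  inferInstanceAs (fromSkeleton C ⋙ shiftFunctor C n ⋙ toSkeletonFunctor C).Additive

variable [HasZeroObject C] [Pretriangulated C]

instance : Pretriangulated (Skeleton C) :=
  pretriangulatedOfEquivalence (skeletonEquivalence C)

instance : (fromSkeleton C).IsTriangulated :=
  isTriangulated_functor_of_equivalence (skeletonEquivalence C)

end Skeleton

section TriangulatedHull

variable {C : Type u} [Category.{v} C] [Preadditive C] [HasZeroObject C] [HasShift C ℤ]
  [∀ n : ℤ, (shiftFunctor C n).Additive] [Pretriangulated C] {ι : Type w}

/-- The smallest triangulated subcategory containing the objects `E i` and closed under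
isomorphisms. -/
def triangulatedClosure (E : ι → C) : ObjectProperty C := fun X ↦
  ∀ S : ObjectProperty C, S.IsTriangulated → S.IsClosedUnderIsomorphisms → (∀ i, S (E i)) → S X

lemma triangulatedClosure_self (E : ι → C) (i : ι) : triangulatedClosure E (E i) :=
  fun _ _ _ hE ↦ hE i

instance (E : ι → C) : (triangulatedClosure E).IsClosedUnderIsomorphisms where
  of_iso e hX S hS hS' hE := S.prop_of_iso e (hX S hS hS' hE)

instance (E : ι → C) : (triangulatedClosure E).IsTriangulated where
  exists_zero := ⟨0, isZero_zero C, fun S _ _ _ ↦ S.prop_zero⟩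
  isStableUnderShiftBy n := ⟨fun _ hX S hS hS' hE ↦ S.le_shift n _ (hX S hS hS' hE)⟩
  ext₂' T hT h₁ h₃ := ObjectProperty.le_isoClosure _ _ fun S hS hS' hE ↦
    S.ext_of_isTriangulatedClosed₂ T hT (h₁ S hS hS' hE) (h₃ S hS hS' hE)

/-- A skeleton of the triangulated subcategory generated by the objects `E i`. Passing to a skeleton
makes every triangulated subcategory closed under isomorphisms, so that the `generator`s generate
even among subcategories that are not assumed to be strictly full. -/
abbrev TriangulatedHull (E : ι → C) : Type u :=
  Skeleton (triangulatedClosure E).FullSubcategory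

namespace TriangulatedHull

variable (E : ι → C)

/-- The fully faithful exact functor from the triangulated hull to the ambient category. -/
abbrev inclusion : TriangulatedHull E ⥤ C :=
  fromSkeleton _ ⋙ (triangulatedClosure E).ι

/-- The object of the triangulated hull isomorphic to `E i`. -/
def generator (i : ι) : TriangulatedHull E :=
  toSkeleton ⟨E i, triangulatedClosure_self E i⟩

/-- The inclusion of the triangulated hull takes `generator E i` to `E i`. -/
def inclusionGeneratorIso (i : ι) : (inclusion E).obj (generator E i) ≅ E i :=
  (triangulatedClosure E).ι.mapIso (fromSkeletonToSkeletonIso _)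

variable {E}

lemma essImage_inclusion {X : C} (hX : triangulatedClosure E X) : (inclusion E).essImage X :=
  ⟨toSkeleton ⟨X, hX⟩, ⟨(triangulatedClosure E).ι.mapIso (fromSkeletonToSkeletonIso _)⟩⟩

lemma exists_nonempty_inclusion_obj_iso {X : TriangulatedHull E}
    (hX : ∃ i, Nonempty (X ≅ generator E i)) : ∃ i, Nonempty ((inclusion E).obj X ≅ E i) :=
  hX.imp fun i ⟨e⟩ ↦ ⟨(inclusion E).mapIso e ≪≫ inclusionGeneratorIso E i⟩

lemma prop_of_generator (S : ObjectProperty (TriangulatedHull E)) (hS : S.IsTriangulated)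
    (hE : ∀ i, S (generator E i)) (X : TriangulatedHull E) : S X := by
  obtain ⟨Y, hY, ⟨e⟩⟩ := ((fromSkeleton _).obj X).property (S.map (inclusion E)) inferInstance
    inferInstance fun i ↦ ⟨_, hE i, ⟨inclusionGeneratorIso E i⟩⟩
  obtain rfl : Y = X := skeleton_skeletal _ ⟨(inclusion E).preimageIso e⟩
  exact hY

end TriangulatedHull

end TriangulatedHull

section ShiftedHom

variable {C : Type u} [Category.{v} C] [Preadditive C] [HasShift C ℤ]

/-- The graded group `Hom(X, Y⟦l⟧)`, `l : ℤ`, is concentrated in the degrees `l ∈ s`. -/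
def HomSupportedOn (X Y : C) (s : Set ℤ) : Prop :=
  ∀ l ∉ s, ∀ φ : X ⟶ Y⟦l⟧, φ = 0

namespace HomSupportedOn

variable {X Y : C} {s t : Set ℤ}

lemma mono (h : HomSupportedOn X Y s) (hst : s ⊆ t) : HomSupportedOn X Y t :=
  fun l hl ↦ h l fun hls ↦ hl (hst hls)

lemma of_iso {X' Y' : C} (h : HomSupportedOn X Y s) (eX : X ≅ X') (eY : Y ≅ Y') :
    HomSupportedOn X' Y' s := by
  intro l hl φ
  rw [← cancel_epi eX.hom, ← cancel_mono (eY.inv⟦l⟧'), h l hl ((eX.hom ≫ φ) ≫ eY.inv⟦l⟧'),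
    comp_zero, zero_comp]

lemma of_map {D : Type u'} [Category.{v'} D] [Preadditive D] [HasShift D ℤ] (F : C ⥤ D)
    [F.CommShift ℤ] [F.Faithful] [F.Additive] (h : HomSupportedOn (F.obj X) (F.obj Y) s) :
    HomSupportedOn X Y s := by
  intro l hl φ
  apply F.map_injective
  rw [← cancel_mono ((F.commShiftIso l).hom.app Y), F.map_zero, zero_comp]
  exact h l hl _

lemma eq_zero (h : HomSupportedOn X Y s) (hs : 0 ∉ s) (φ : X ⟶ Y) : φ = 0 := by
  rw [← cancel_mono ((shiftFunctorZero C ℤ).inv.app Y), zero_comp]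
  exact h 0 hs _

lemma empty_of_eq_zero (h : HomSupportedOn X Y {0}) (h₀ : ∀ φ : X ⟶ Y, φ = 0) :
    HomSupportedOn X Y ∅ := by
  intro l _ φ
  obtain rfl | hl := eq_or_ne l 0
  · rw [← cancel_mono ((shiftFunctorZero C ℤ).hom.app Y), zero_comp]
    exact h₀ _
  · exact h l hl φ

variable [∀ n : ℤ, (shiftFunctor C n).Additive]

lemma shift_eq_zero (h : HomSupportedOn X Y s) {p q : ℤ} (hpq : q - p ∉ s) (φ : X⟦p⟧ ⟶ Y⟦q⟧) :
    φ = 0 := by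
  rw [← cancel_mono ((shiftFunctorAdd' C (q - p) p q (by omega)).hom.app Y), zero_comp]
  obtain ⟨ψ, hψ⟩ := (shiftFunctor C p).map_surjective
    (φ ≫ (shiftFunctorAdd' C (q - p) p q (by omega)).hom.app Y)
  rw [← hψ, h _ hpq ψ, Functor.map_zero]

lemma shift_left_eq_zero (h : HomSupportedOn X Y s) {p : ℤ} (hp : -p ∉ s) (φ : X⟦p⟧ ⟶ Y) :
    φ = 0 := by
  rw [← cancel_mono ((shiftFunctorZero C ℤ).inv.app Y), zero_comp]
  exact h.shift_eq_zero (by simpa using hp) _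

lemma of_shift_left (h : ∀ p : ℤ, -p ∉ s → ∀ φ : X⟦p⟧ ⟶ Y, φ = 0) : HomSupportedOn X Y s := by
  intro l hl φ
  apply (shiftFunctor C (-l)).map_injective
  rw [← cancel_mono ((shiftFunctorCompIsoId C l (-l) (by omega)).hom.app Y), Functor.map_zero,
    zero_comp]
  exact h _ (by simpa using hl) _

end HomSupportedOn

end ShiftedHom

section Cone

variable {C : Type u} [Category.{v} C] [Preadditive C] [HasZeroObject C] [HasShift C ℤ]
  [∀ n : ℤ, (shiftFunctor C n).Additive] [Pretriangulated C] {T : Triangle C}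
  (hT : T ∈ distTriang C)

include hT

lemma homSupportedOn_obj₃_right {W : C} {s : Set ℤ} (h₁ : HomSupportedOn W T.obj₁ ∅)
    (h₂ : HomSupportedOn W T.obj₂ s) : HomSupportedOn W T.obj₃ s := by
  refine .of_shift_left fun p hp φ ↦ ?_
  obtain ⟨ψ, rfl⟩ := T.coyoneda_exact₃ hT φ (h₁.shift_eq_zero (Set.notMem_empty _) _)
  rw [h₂.shift_left_eq_zero hp ψ, zero_comp]

lemma homSupportedOn_obj₃_left {V : C} {s : Set ℤ} (h₁ : HomSupportedOn T.obj₁ V ∅)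
    (h₂ : HomSupportedOn T.obj₂ V s) : HomSupportedOn T.obj₃ V s := by
  intro l hl φ
  obtain ⟨ψ, rfl⟩ := T.yoneda_exact₃ hT φ (h₂ l hl _)
  rw [h₁.shift_eq_zero (Set.notMem_empty _) ψ, comp_zero]

lemma homSupportedOn_obj₃_right_of_bijective {W : C} (h₁ : HomSupportedOn W T.obj₁ {0})
    (h₂ : HomSupportedOn W T.obj₂ {0})
    (hb : Function.Bijective fun φ : W ⟶ T.obj₁ ↦ φ ≫ T.mor₁) : HomSupportedOn W T.obj₃ ∅ := by
  refine .of_shift_left fun p _ φ ↦ ?_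
  have hφ : φ ≫ T.mor₃ = 0 := by
    obtain rfl | hp := eq_or_ne p 1
    · obtain ⟨ψ, hψ⟩ := (shiftFunctor C (1 : ℤ)).map_surjective (φ ≫ T.mor₃)
      have hψ₀ : ψ ≫ T.mor₁ = 0 ≫ T.mor₁ := (shiftFunctor C (1 : ℤ)).map_injective <| by
        rw [Functor.map_comp, hψ, Category.assoc, comp_distTriang_mor_zero₃₁ T hT, comp_zero,
          zero_comp, Functor.map_zero]
      rw [← hψ, hb.1 hψ₀, Functor.map_zero]
    · exact h₁.shift_eq_zero (sub_ne_zero.2 hp.symm) _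
  obtain ⟨ψ, rfl⟩ := T.coyoneda_exact₃ hT φ hφ
  obtain rfl | hp := eq_or_ne p 0
  · obtain ⟨χ, hχ : χ ≫ T.mor₁ = (shiftFunctorZero C ℤ).inv.app W ≫ ψ⟩ := hb.2 _
    rw [← cancel_epi ((shiftFunctorZero C ℤ).inv.app W), ← Category.assoc, ← hχ, Category.assoc,
      comp_distTriang_mor_zero₁₂ T hT, comp_zero, comp_zero]
  · rw [h₂.shift_left_eq_zero (neg_ne_zero.2 hp) ψ, zero_comp]

lemma homSupportedOn_obj₃_left_of_bijective {V : C} (h₁ : HomSupportedOn T.obj₁ V {0})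
    (h₂ : HomSupportedOn T.obj₂ V {0})
    (hb : Function.Bijective fun φ : T.obj₂ ⟶ V ↦ T.mor₁ ≫ φ) : HomSupportedOn T.obj₃ V ∅ := by
  intro l _ φ
  have hφ : T.mor₂ ≫ φ = 0 := by
    obtain rfl | hl := eq_or_ne l 0
    · rw [← cancel_mono ((shiftFunctorZero C ℤ).hom.app V)]
      apply hb.1
      simp only [Category.assoc, comp_distTriang_mor_zero₁₂_assoc T hT, zero_comp, comp_zero]
    · exact h₂ l hl _
  obtain ⟨ψ, rfl⟩ := T.yoneda_exact₃ hT φ hφ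
  obtain rfl | hl := eq_or_ne l 1
  · obtain ⟨χ, rfl⟩ := (shiftFunctor C (1 : ℤ)).map_surjective ψ
    obtain ⟨ψ, rfl⟩ := hb.2 χ
    rw [Functor.map_comp, comp_distTriang_mor_zero₃₁_assoc T hT, zero_comp]
  · rw [h₁.shift_eq_zero (sub_ne_zero.2 hl) ψ, comp_zero]

lemma exists_eq_smul_id_obj₃ {k : Type w} [Ring k] [Linear k C]
    (h₂₁ : ∀ φ : T.obj₂ ⟶ T.obj₁⟦(1 : ℤ)⟧, φ = 0) (h₁₃ : ∀ φ : T.obj₁⟦(1 : ℤ)⟧ ⟶ T.obj₃, φ = 0)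
    (h₂ : ∀ φ : T.obj₂ ⟶ T.obj₂, ∃ c : k, φ = c • 𝟙 T.obj₂) (φ : T.obj₃ ⟶ T.obj₃) :
    ∃ c : k, φ = c • 𝟙 T.obj₃ := by
  obtain ⟨ψ, hψ⟩ := T.coyoneda_exact₃ hT (T.mor₂ ≫ φ) (h₂₁ _)
  obtain ⟨c, rfl⟩ := h₂ ψ
  obtain ⟨χ, hχ⟩ := T.yoneda_exact₃ hT (φ - c • 𝟙 T.obj₃) (by simp [hψ])
  exact ⟨c, by rw [← sub_eq_zero, hχ, h₁₃ χ, comp_zero]⟩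

end Cone

section HomBasis

variable {k : Type w} [Ring k] {C : Type u} [Category.{v} C] [Preadditive C] [Linear k C]
  {X Y Z : C}

variable (k) in
/-- `f` is a basis of the `k`-module `X ⟶ Y`. -/
def IsHomBasis (f : X ⟶ Y) : Prop :=
  Function.Bijective fun c : k ↦ c • f

namespace IsHomBasis

lemma ne_zero [Nontrivial k] {f : X ⟶ Y} (hf : IsHomBasis k f) : f ≠ 0 := by
  rintro rfl
  exact one_ne_zero (hf.1 (by simp only [smul_zero] : (1 : k) • (0 : X ⟶ Y) = (0 : k) • 0))

lemma exists_eq_smul {f : X ⟶ Y} (hf : IsHomBasis k f) (φ : X ⟶ Y) : ∃ c : k, φ = c • f :=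
  (hf.2 φ).imp fun _ ↦ Eq.symm

lemma map {D : Type u'} [Category.{v'} D] [Preadditive D] [Linear k D] (F : C ⥤ D)
    [F.Linear k] [F.Full] [F.Faithful] {f : X ⟶ Y} (hf : IsHomBasis k f) :
    IsHomBasis k (F.map f) := by
  have := ((Functor.FullyFaithful.ofFullyFaithful F).map_bijective X Y).comp hf
  simpa only [IsHomBasis, Function.comp_def, F.map_smul] using this

lemma bijective_comp_right {f : X ⟶ Y} {g : Y ⟶ Z} (hf : IsHomBasis k f)
    (hfg : IsHomBasis k (f ≫ g)) : Function.Bijective fun φ : X ⟶ Y ↦ φ ≫ g :=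
  (Function.Bijective.of_comp_iff _ hf).1 <| by
    simpa only [IsHomBasis, Function.comp_def, Linear.smul_comp] using hfg

lemma bijective_comp_left {f : X ⟶ Y} {g : Y ⟶ Z} (hg : IsHomBasis k g)
    (hfg : IsHomBasis k (f ≫ g)) : Function.Bijective fun φ : Y ⟶ Z ↦ f ≫ φ :=
  (Function.Bijective.of_comp_iff _ hg).1 <| by
    simpa only [IsHomBasis, Function.comp_def, Linear.comp_smul] using hfg

end IsHomBasis

end HomBasis

section StrongExceptional

variable (k : Type w) [Ring k] {C : Type u} [Category.{v} C] [Preadditive C] [Linear k C]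
  [HasShift C ℤ] {ι : Type*} [LT ι]

/-- `E` is a strong exceptional sequence, which is not required to be full. -/
structure IsStrongExceptional (E : ι → C) : Prop where
  exists_eq_smul_id (i : ι) (φ : E i ⟶ E i) : ∃ c : k, φ = c • 𝟙 (E i)
  homSupportedOn_empty {i j : ι} (hij : j < i) : HomSupportedOn (E i) (E j) ∅
  homSupportedOn_zero (i j : ι) : HomSupportedOn (E i) (E j) {0}

namespace IsStrongExceptional

variable {k}

lemma of_iso {E E' : ι → C} (hE : IsStrongExceptional k E) (e : ∀ i, E i ≅ E' i) :
    IsStrongExceptional k E' where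
  exists_eq_smul_id i φ := by
    obtain ⟨c, hc⟩ := hE.exists_eq_smul_id i ((e i).hom ≫ φ ≫ (e i).inv)
    refine ⟨c, ?_⟩
    rw [← cancel_epi (e i).hom, ← cancel_mono (e i).inv, Category.assoc, hc]
    simp
  homSupportedOn_empty hij := (hE.homSupportedOn_empty hij).of_iso (e _) (e _)
  homSupportedOn_zero i j := (hE.homSupportedOn_zero i j).of_iso (e i) (e j)

lemma of_map {D : Type u'} [Category.{v'} D] [Preadditive D] [Linear k D] [HasShift D ℤ]
    {E : ι → C} (F : C ⥤ D) [F.CommShift ℤ] [F.Faithful] [F.Additive] [F.Linear k]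
    (hE : IsStrongExceptional k fun i ↦ F.obj (E i)) : IsStrongExceptional k E where
  exists_eq_smul_id i φ := by
    obtain ⟨c, hc⟩ := hE.exists_eq_smul_id i (F.map φ)
    exact ⟨c, F.map_injective (by rw [hc, F.map_smul, F.map_id])⟩
  homSupportedOn_empty hij := (hE.homSupportedOn_empty hij).of_map F
  homSupportedOn_zero i j := (hE.homSupportedOn_zero i j).of_map F

end IsStrongExceptional

end StrongExceptional

section Mutation

variable {k : Type w} [Ring k] {C : Type u} [Category.{v} C] [Preadditive C] [Linear k C]
  [HasZeroObject C] [HasShift C ℤ] [∀ n : ℤ, (shiftFunctor C n).Additive] [Pretriangulated C]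
  {A : Fin 3 ⥤ C} (hA : IsStrongExceptional k A.obj)
  (hb : ∀ {i j : Fin 3} (f : i ⟶ j), IsHomBasis k (A.map f)) {f : (1 : Fin 3) ⟶ 2} {S : C}
  {g : A.obj 2 ⟶ S} {h : S ⟶ (A.obj 1)⟦(1 : ℤ)⟧} (hT : Triangle.mk (A.map f) g h ∈ distTriang C)

include hA hb hT

lemma homSupportedOn_mutation_right {i : Fin 3} (u : i ⟶ 1) : HomSupportedOn (A.obj i) S ∅ :=
  homSupportedOn_obj₃_right_of_bijective hT (hA.homSupportedOn_zero i 1)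
    (hA.homSupportedOn_zero i 2)
    ((hb u).bijective_comp_right (A.map_comp u f ▸ hb (u ≫ f)))

lemma homSupportedOn_mutation_left : HomSupportedOn S (A.obj 2) ∅ :=
  homSupportedOn_obj₃_left_of_bijective hT (hA.homSupportedOn_zero 1 2)
    (hA.homSupportedOn_zero 2 2)
    ((hb (𝟙 2)).bijective_comp_left (A.map_comp f (𝟙 2) ▸ hb (f ≫ 𝟙 2)))

lemma isStrongExceptional_mutation : IsStrongExceptional k ![A.obj 0, A.obj 2, S] := by
  have h₀S : HomSupportedOn (A.obj 0) S ∅ :=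
    homSupportedOn_mutation_right hA hb hT (homOfLE zero_le_one)
  have h₁S : HomSupportedOn (A.obj 1) S ∅ := homSupportedOn_mutation_right hA hb hT (𝟙 1)
  have hS₀ : HomSupportedOn S (A.obj 0) ∅ :=
    homSupportedOn_obj₃_left hT (hA.homSupportedOn_empty (by decide))
      (hA.homSupportedOn_empty (by decide))
  have hS₂ : HomSupportedOn S (A.obj 2) ∅ := homSupportedOn_mutation_left hA hb hT
  have h₂₁ : HomSupportedOn (A.obj 2) (A.obj 1) ∅ := hA.homSupportedOn_empty (by decide)
  have h₂S : HomSupportedOn (A.obj 2) S {0} :=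
    homSupportedOn_obj₃_right hT h₂₁ (hA.homSupportedOn_zero 2 2)
  have hSS : HomSupportedOn S S {0} := homSupportedOn_obj₃_left hT h₁S h₂S
  have hS : ∀ φ : S ⟶ S, ∃ c : k, φ = c • 𝟙 S :=
    exists_eq_smul_id_obj₃ hT (h₂₁ 1 (Set.notMem_empty _))
      (h₁S.shift_left_eq_zero (Set.notMem_empty _)) (hA.exists_eq_smul_id 2)
  refine ⟨fun i ↦ ?_, fun {i j} hij ↦ ?_, fun i j ↦ ?_⟩
  · fin_cases i
    exacts [hA.exists_eq_smul_id 0, hA.exists_eq_smul_id 2, hS]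
  · fin_cases i <;> fin_cases j <;> first | exact absurd hij (by decide) | skip
    exacts [hA.homSupportedOn_empty (by decide), hS₀, hS₂]
  · fin_cases i <;> fin_cases j
    exacts [hA.homSupportedOn_zero 0 0, hA.homSupportedOn_zero 0 2,
      h₀S.mono (Set.empty_subset _), hA.homSupportedOn_zero 2 0, hA.homSupportedOn_zero 2 2, h₂S,
      hS₀.mono (Set.empty_subset _), hS₂.mono (Set.empty_subset _), hSS]

end Mutation

section HullGenerator

variable {k : Type w} [Ring k] {C : Type u} [Category.{v} C] [Preadditive C] [Linear k C]
  [HasZeroObject C] [HasShift C ℤ] [∀ n : ℤ, (shiftFunctor C n).Additive] [Pretriangulated C]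
  {ι : Type*} [LT ι]

lemma IsStrongExceptional.generator {E : ι → C} (hE : IsStrongExceptional k E) :
    IsStrongExceptional k (TriangulatedHull.generator E) :=
  (hE.of_iso fun i ↦ (TriangulatedHull.inclusionGeneratorIso E i).symm).of_map
    (TriangulatedHull.inclusion E)

end HullGenerator

section Fullness

variable {k : Type} [Field k] {C : Type} [Category.{0} C] [Preadditive C] [Linear k C]
  [HasZeroObject C] [HasShift C ℤ] [∀ n : ℤ, (shiftFunctor C n).Additive] [Pretriangulated C]

lemma IsStrongExceptional.fullStrongExceptional_generator {n : ℕ} {E : Fin n → C}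
    (hE : IsStrongExceptional k E) :
    FullStrongExceptional k ⟨TriangulatedHull E⟩ (TriangulatedHull.generator E) :=
  ⟨hE.generator.exists_eq_smul_id,
    fun _ _ hij l ↦ hE.generator.homSupportedOn_empty hij l (Set.notMem_empty l),
    fun i j ↦ hE.generator.homSupportedOn_zero i j, TriangulatedHull.prop_of_generator⟩

end Fullness

section FunctorComparison

variable {B : Type*} [Category* B] {C : Type u} [Category.{v} C]
  {D : Type u'} [Category.{v'} D]

lemma map_eq_zero_iff_of_iso [HasZeroMorphisms D] {F G : C ⥤ D} (e : F ≅ G) {X Y : C}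
    (f : X ⟶ Y) : F.map f = 0 ↔ G.map f = 0 := by
  rw [← cancel_mono (e.hom.app Y), e.hom.naturality, zero_comp, ← cancel_epi (e.hom.app X),
    comp_zero]

lemma map_eq_zero_iff_of_comp_iso [HasZeroMorphisms D] {J : B ⥤ C} [J.Full] {F G : C ⥤ D}
    (e : J ⋙ F ≅ J ⋙ G) {X Y : C} (hX : J.essImage X) (hY : J.essImage Y) (f : X ⟶ Y) :
    F.map f = 0 ↔ G.map f = 0 := by
  obtain ⟨X', ⟨eX⟩⟩ := hX
  obtain ⟨Y', ⟨eY⟩⟩ := hY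
  obtain ⟨f', hf'⟩ := J.map_surjective (eX.hom ≫ f ≫ eY.inv)
  have (H : C ⥤ D) : H.map f = 0 ↔ (J ⋙ H).map f' = 0 := by
    rw [Functor.comp_map, hf', H.map_comp, H.map_comp, ← cancel_epi (H.map eX.hom), comp_zero,
      ← cancel_mono (H.map eY.inv), zero_comp, Category.assoc]
  rw [this F, this G, map_eq_zero_iff_of_iso e]

variable {k : Type w} [Ring k] [Preadditive C] [Linear k C] [Preadditive D] [Linear k D]

lemma nonempty_comp_iso_comp {ι : Type*} {E : ι → C}
    (hE : ∀ i (φ : E i ⟶ E i), ∃ c : k, φ = c • 𝟙 (E i)) {J : B ⥤ C}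
    (hJ : ∀ X, ∃ i, Nonempty (J.obj X ≅ E i)) {F G : C ⥤ D} [F.Linear k] [G.Linear k]
    (hF : ∀ i j, i ≠ j → ∀ φ : E i ⟶ E j, F.map φ = 0)
    (hG : ∀ i j, i ≠ j → ∀ φ : E i ⟶ E j, G.map φ = 0)
    (hFG : ∀ i, Nonempty (F.obj (E i) ≅ G.obj (E i))) : Nonempty (J ⋙ F ≅ J ⋙ G) := by
  choose i e using hJ
  replace e X := (e X).some
  have e' i := (hFG i).some
  have comm {i j : ι} (φ : E i ⟶ E j) : F.map φ ≫ (e' j).hom = (e' i).hom ≫ G.map φ := by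
    obtain rfl | hij := eq_or_ne i j
    · obtain ⟨c, rfl⟩ := hE i φ
      simp [F.map_smul, G.map_smul]
    · rw [hF i j hij, hG i j hij, zero_comp, comp_zero]
  refine ⟨NatIso.ofComponents
    (fun X ↦ F.mapIso (e X) ≪≫ e' (i X) ≪≫ (G.mapIso (e X)).symm) fun {X Y} f ↦ ?_⟩
  have := comm ((e X).inv ≫ J.map f ≫ (e Y).hom)
  rw [F.map_comp, F.map_comp, G.map_comp, G.map_comp] at this
  rw [← cancel_epi (F.map (e X).inv), ← cancel_mono (G.map (e Y).hom)]
  simpa only [Functor.comp_map, Iso.trans_hom, Iso.symm_hom, Functor.mapIso_hom,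
    Functor.mapIso_inv, Category.assoc, Iso.map_inv_hom_id, Iso.map_inv_hom_id_assoc,
    Category.comp_id] using this

end FunctorComparison

section KilledObject

variable {C : Type u} [Category.{v} C] [Preadditive C] [HasZeroObject C] [HasShift C ℤ]
  [∀ n : ℤ, (shiftFunctor C n).Additive] [Pretriangulated C]
  {D : Type u'} [Category.{v'} D] [Preadditive D] [HasZeroObject D] [HasShift D ℤ]
  [∀ n : ℤ, (shiftFunctor D n).Additive] [Pretriangulated D]
  (F : C ⥤ D) [F.CommShift ℤ] [F.IsTriangulated]

lemma nonempty_map_obj₃_iso_shift {T : Triangle C} (hT : T ∈ distTriang C)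
    (h₂ : IsZero (F.obj T.obj₂)) : Nonempty (F.obj T.obj₃ ≅ (F.obj T.obj₁)⟦(1 : ℤ)⟧) := by
  have : IsIso (F.mapTriangle.obj T).mor₃ :=
    (Triangle.isZero₂_iff_isIso₃ _ (F.map_distinguished T hT)).1 h₂
  let e := asIso (F.mapTriangle.obj T).mor₃
  exact ⟨e⟩

end KilledObject

section FreeCategory

variable (k : Type w) [CommRing k] {J : Type u} [Category.{v} J]

lemma isHomBasis_embedding_map [Quiver.IsThin J] {a b : J} (f : a ⟶ b) :
    IsHomBasis k ((Free.embedding k J).map f) := by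
  have h : (fun c : k ↦ c • Finsupp.single f (1 : k)) = (Finsupp.uniqueLinearEquiv k k f).symm :=
    funext (Finsupp.smul_single_one f)
  exact (congrArg Function.Bijective h).mpr (LinearEquiv.bijective _)

lemma embedding_hom_eq_zero {a b : J} (hab : IsEmpty (a ⟶ b))
    (φ : (Free.embedding k J).obj a ⟶ (Free.embedding k J).obj b) : φ = 0 :=
  Finsupp.ext fun f ↦ hab.elim f

end FreeCategory

section MatrixCategory

variable {Q : Type u} [Category.{v} Q] [Preadditive Q]

section Linear

variable {k : Type w} [Semiring k] [Linear k Q]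

instance : Linear k (Mat_ Q) where
  homModule M N := inferInstanceAs (Module k (∀ (i : M.ι) (j : N.ι), M.X i ⟶ N.X j))
  smul_comp _ _ _ r f g := by
    ext i j
    change ∑ l, (r • f i l) ≫ g l j = r • ∑ l, f i l ≫ g l j
    simp only [Linear.smul_comp, Finset.smul_sum]
  comp_smul _ _ _ f r g := by
    ext i j
    change ∑ l, f i l ≫ (r • g l j) = r • ∑ l, f i l ≫ g l j
    simp only [Linear.comp_smul, Finset.smul_sum]

instance : (Mat_.embedding Q).Linear k where

instance {D : Type u} [Category.{v} D] [Preadditive D] [HasFiniteBiproducts D] [Linear k D]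
    (F : Q ⥤ D) [F.Additive] [F.Linear k] : (Mat_.lift F).Linear k where
  map_smul {X Y} f r := by
    apply biproduct.hom_ext
    intro j
    apply biproduct.hom_ext'
    intro i
    change biproduct.ι (fun i ↦ F.obj (X.X i)) i ≫
        (biproduct.matrix fun i j ↦ F.map (r • f i j)) ≫ biproduct.π (fun i ↦ F.obj (Y.X i)) j =
      biproduct.ι (fun i ↦ F.obj (X.X i)) i ≫
        (r • biproduct.matrix fun i j ↦ F.map (f i j)) ≫ biproduct.π (fun i ↦ F.obj (Y.X i)) j
    simp only [Linear.smul_comp, Linear.comp_smul, biproduct.matrix_π, biproduct.ι_desc, F.map_smul]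

end Linear

variable (Q) in
/-- The additive closure of a preadditive category `Q`: the full subcategory of `Mat_ Q` on the
families indexed by some `Fin n`. Unlike `Mat_ Q` it lives in the same universe as `Q`. -/
abbrev AdditiveClosure : Type u :=
  InducedCategory (Mat_ Q) fun s : Σ n : ℕ, (Fin n → Q) ↦ ⟨Fin s.1, s.2⟩

namespace AdditiveClosure

variable (Q) in
/-- The inclusion of the additive closure into the category of all matrices. -/
abbrev toMat : AdditiveClosure Q ⥤ Mat_ Q := inducedFunctor _

instance : (toMat Q).EssSurj where
  mem_essImage M :=
    ⟨(⟨Fintype.card M.ι, M.X ∘ (Fintype.equivFin M.ι).symm⟩ : Σ n : ℕ, (Fin n → Q)),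
      ⟨Mat_.isoBiproductEmbedding _ ≪≫
        biproduct.whiskerEquiv (Fintype.equivFin M.ι).symm
          (fun _ ↦ (Iso.refl _ : (Mat_.embedding Q).obj _ ≅ _)) ≪≫
        (Mat_.isoBiproductEmbedding M).symm⟩⟩

instance : (toMat Q).IsEquivalence where

instance : HasFiniteBiproducts (AdditiveClosure Q) := by
  have : HasFiniteProducts (AdditiveClosure Q) :=
    ⟨fun n ↦ Adjunction.hasLimitsOfShape_of_equivalence (toMat Q)⟩
  exact HasFiniteBiproducts.of_hasFiniteProducts

instance : HasBinaryBiproducts (AdditiveClosure Q) :=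
  hasBinaryBiproducts_of_finite_biproducts _

instance : (toMat Q).asEquivalence.functor.Additive := inferInstanceAs (toMat Q).Additive

instance : (toMat Q).inv.Additive := inferInstanceAs (toMat Q).asEquivalence.inverse.Additive

instance {k : Type w} [Semiring k] [Linear k Q] : (toMat Q).asEquivalence.functor.Linear k :=
  inferInstanceAs ((toMat Q).Linear k)

instance {k : Type w} [Semiring k] [Linear k Q] : (toMat Q).inv.Linear k :=
  inferInstanceAs ((toMat Q).asEquivalence.inverse.Linear k)

variable (Q) in
/-- The functor taking an object of `Q` to the corresponding family with one member, up to the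
equivalence with `Mat_ Q`. -/
def embedding : Q ⥤ AdditiveClosure Q :=
  Mat_.embedding Q ⋙ (toMat Q).inv

instance : (embedding Q).Full := inferInstanceAs (Mat_.embedding Q ⋙ (toMat Q).inv).Full

instance : (embedding Q).Faithful := inferInstanceAs (Mat_.embedding Q ⋙ (toMat Q).inv).Faithful

variable {D : Type u} [Category.{v} D] [Preadditive D] [HasFiniteBiproducts D]

/-- The extension of an additive functor to the additive closure. -/
def lift (F : Q ⥤ D) [F.Additive] : AdditiveClosure Q ⥤ D :=
  toMat Q ⋙ Mat_.lift F

/-- The functor `lift F` extends `F`. -/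
def embeddingLiftIso (F : Q ⥤ D) [F.Additive] : embedding Q ⋙ lift F ≅ F :=
  Functor.isoWhiskerLeft (Mat_.embedding Q)
    (Functor.isoWhiskerRight (toMat Q).asEquivalence.counitIso (Mat_.lift F)) ≪≫
    Mat_.embeddingLiftIso F

instance (F : Q ⥤ D) [F.Additive] : (lift F).Additive :=
  inferInstanceAs (toMat Q ⋙ Mat_.lift F).Additive

section Linear

variable {k : Type w} [Semiring k] [Linear k Q]

instance : (embedding Q).Linear k :=
  inferInstanceAs ((Mat_.embedding Q ⋙ (toMat Q).inv).Linear k)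

instance [Linear k D] (F : Q ⥤ D) [F.Additive] [F.Linear k] : (lift F).Linear k :=
  inferInstanceAs ((toMat Q ⋙ Mat_.lift F).Linear k)

end Linear

end AdditiveClosure

end MatrixCategory

section HomotopyCategory

variable (C : Type u) [Category.{v} C] [Preadditive C] [HasZeroObject C]

/-- The functor taking an object to the corresponding complex concentrated in degree zero. -/
abbrev degreeZero : C ⥤ HomotopyCategory C (ComplexShape.up ℤ) :=
  CochainComplex.singleFunctor C 0 ⋙ HomotopyCategory.quotient C (ComplexShape.up ℤ)

instance : (degreeZero C).Faithful where
  map_injective {X Y f g} hfg := by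
    have h := HomotopyCategory.homotopyOfEq _ _ hfg
    apply (CochainComplex.singleFunctor C 0).map_injective
    ext n
    rw [h.comm n]
    simp [dNext, prevD]

variable {C}

lemma homSupportedOn_degreeZero (X Y : C) :
    HomSupportedOn ((degreeZero C).obj X) ((degreeZero C).obj Y) {0} := by
  intro l hl φ
  let Q := HomotopyCategory.quotient C (ComplexShape.up ℤ)
  obtain ⟨ψ, hψ⟩ := Q.map_surjective (φ ≫ (Q.commShiftIso l).inv.app _)
  have hψ₀ : ψ = 0 := by
    ext n
    obtain rfl | hn := eq_or_ne n 0
    · exact (HomologicalComplex.isZero_single_obj_X (ComplexShape.up ℤ) 0 Y (0 + l)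
        (by simpa using hl)).eq_of_tgt _ _
    · exact (HomologicalComplex.isZero_single_obj_X (ComplexShape.up ℤ) 0 X n hn).eq_of_src _ _
  rw [← cancel_mono ((Q.commShiftIso l).inv.app _), zero_comp, ← hψ, hψ₀, Functor.map_zero]

lemma isStrongExceptional_degreeZero {k : Type w} [Ring k] [Linear k C] {ι : Type*} [LT ι]
    {P : ι → C} (hP : ∀ i (φ : P i ⟶ P i), ∃ c : k, φ = c • 𝟙 (P i))
    (hP₀ : ∀ i j, j < i → ∀ φ : P i ⟶ P j, φ = 0) :
    IsStrongExceptional k fun i ↦ (degreeZero C).obj (P i) where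
  exists_eq_smul_id i φ := by
    obtain ⟨φ, rfl⟩ := (degreeZero C).map_surjective φ
    obtain ⟨c, rfl⟩ := hP i φ
    exact ⟨c, by rw [Functor.map_smul, CategoryTheory.Functor.map_id]⟩
  homSupportedOn_empty {i j} hij := (homSupportedOn_degreeZero _ _).empty_of_eq_zero fun φ ↦ by
    obtain ⟨φ, rfl⟩ := (degreeZero C).map_surjective φ
    rw [hP₀ i j hij φ, Functor.map_zero]
  homSupportedOn_zero i j := homSupportedOn_degreeZero _ _

variable {D : Type u'} [Category.{v'} D] [Preadditive D] [HasZeroObject D]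

/-- The functor induced by `F` on homotopy categories extends `F` along `degreeZero`. -/
def degreeZeroMapIso (F : C ⥤ D) [F.Additive] :
    degreeZero C ⋙ F.mapHomotopyCategory (ComplexShape.up ℤ) ≅ F ⋙ degreeZero D :=
  Functor.isoWhiskerLeft (CochainComplex.singleFunctor C 0)
      (F.mapHomotopyCategoryFactors (ComplexShape.up ℤ)) ≪≫
    Functor.isoWhiskerRight (HomologicalComplex.singleMapHomologicalComplex F _ 0)
      (HomotopyCategory.quotient D (ComplexShape.up ℤ))

end HomotopyCategory

section Linearization

variable (k : Type v) [CommRing k] (J : Type u) [Category.{v} J]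

/-- The free `k`-linear additive category on `J`. -/
abbrev Linearization : Type u :=
  AdditiveClosure (Free k J)

/-- The universal functor from `J` to a `k`-linear additive category. -/
def toLinearization : J ⥤ Linearization k J :=
  Free.embedding k J ⋙ AdditiveClosure.embedding (Free k J)

/-- The universal functor `toLinearization k J`, with values regarded as complexes in degree
zero. -/
def toLinearizationComplex : J ⥤ HomotopyCategory (Linearization k J) (ComplexShape.up ℤ) :=
  toLinearization k J ⋙ degreeZero _

variable {J}

lemma isHomBasis_toLinearization_map [Quiver.IsThin J] {a b : J} (f : a ⟶ b) :
    IsHomBasis k ((toLinearization k J).map f) :=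
  (isHomBasis_embedding_map k f).map (AdditiveClosure.embedding (Free k J))

lemma isHomBasis_id_toLinearization_obj [Quiver.IsThin J] (a : J) :
    IsHomBasis k (𝟙 ((toLinearization k J).obj a)) :=
  (toLinearization k J).map_id a ▸ isHomBasis_toLinearization_map k (𝟙 a)

lemma toLinearization_hom_eq_zero {a b : J} (hab : IsEmpty (a ⟶ b))
    (φ : (toLinearization k J).obj a ⟶ (toLinearization k J).obj b) : φ = 0 := by
  obtain ⟨φ, rfl⟩ := (AdditiveClosure.embedding (Free k J)).map_surjective φ
  exact (congrArg _ (embedding_hom_eq_zero k hab φ)).trans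
    ((AdditiveClosure.embedding (Free k J)).map_zero _ _)

lemma isHomBasis_toLinearizationComplex_map [Quiver.IsThin J] {a b : J} (f : a ⟶ b) :
    IsHomBasis k ((toLinearizationComplex k J).map f) :=
  (isHomBasis_toLinearization_map k f).map (degreeZero _)

lemma isStrongExceptional_toLinearizationComplex [Quiver.IsThin J] [LT J]
    (hJ : ∀ a b : J, b < a → IsEmpty (a ⟶ b)) :
    IsStrongExceptional k (toLinearizationComplex k J).obj :=
  isStrongExceptional_degreeZero (fun a ↦ (isHomBasis_id_toLinearization_obj k a).exists_eq_smul)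
    fun a b hab ↦ toLinearization_hom_eq_zero k (hJ a b hab)

variable {D : Type u} [Category.{v} D] [Preadditive D] [Linear k D] [HasZeroObject D]
  [HasFiniteBiproducts D]

/-- The extension of a functor `J ⥤ D` to the homotopy categories of `Linearization k J` and
`D`. -/
abbrev extension (F : J ⥤ D) : HomotopyCategory (Linearization k J) (ComplexShape.up ℤ) ⥤
    HomotopyCategory D (ComplexShape.up ℤ) :=
  (AdditiveClosure.lift (Free.lift k F)).mapHomotopyCategory (ComplexShape.up ℤ)

/-- The functor `extension k F` extends `F`. -/
def toLinearizationComplexExtensionIso (F : J ⥤ D) :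
    toLinearizationComplex k J ⋙ extension k F ≅ F ⋙ degreeZero D :=
  Functor.isoWhiskerLeft (toLinearization k J)
      (degreeZeroMapIso (AdditiveClosure.lift (Free.lift k F))) ≪≫
    Functor.isoWhiskerRight
      (Functor.isoWhiskerLeft (Free.embedding k J)
        (AdditiveClosure.embeddingLiftIso (Free.lift k F)) ≪≫ Free.embeddingLiftIso k F)
      (degreeZero D)

lemma extension_map_eq_zero_iff (F : J ⥤ D) {a b : J} (f : a ⟶ b) :
    (extension k F).map ((toLinearizationComplex k J).map f) = 0 ↔ F.map f = 0 :=
  (map_eq_zero_iff_of_iso (toLinearizationComplexExtensionIso k F) f).trans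
    (Functor.map_eq_zero_iff (degreeZero D))

lemma isZero_extension_obj (F : J ⥤ D) {a : J} (ha : IsZero (F.obj a)) :
    IsZero ((extension k F).obj ((toLinearizationComplex k J).obj a)) :=
  ((degreeZero D).map_isZero ha).of_iso ((toLinearizationComplexExtensionIso k F).app a)

/-- The values of `extension k F` and `extension k G` agree at an object of `J` where those of `F`
and `G` do. -/
def extensionObjIso {F G : J ⥤ D} {a : J} (e : F.obj a ≅ G.obj a) :
    (extension k F).obj ((toLinearizationComplex k J).obj a) ≅
      (extension k G).obj ((toLinearizationComplex k J).obj a) :=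
  (toLinearizationComplexExtensionIso k F).app a ≪≫ (degreeZero D).mapIso e ≪≫
    ((toLinearizationComplexExtensionIso k G).app a).symm

end Linearization

section EndoToZero

variable (k : Type) [CommRing k] {D : Type} [Category.{0} D] [Preadditive D] [Linear k D]
  [HasZeroObject D] [HasFiniteBiproducts D] {X : D}

/-- The diagram `X ⟶ X ⟶ 0` whose first map is `m`. -/
abbrev endoToZero (m : X ⟶ X) : Fin 3 ⥤ D :=
  ComposableArrows.mk₂ m (0 : X ⟶ 0)

lemma isZero_extension_endoToZero_obj (m : X ⟶ X) :
    IsZero ((extension k (endoToZero m)).obj ((toLinearizationComplex k (Fin 3)).obj 2)) :=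
  isZero_extension_obj k (endoToZero m) (isZero_zero D)

lemma extension_endoToZero_map_eq_zero_iff (m : X ⟶ X) (u : (0 : Fin 3) ⟶ 1) :
    (extension k (endoToZero m)).map ((toLinearizationComplex k (Fin 3)).map u) = 0 ↔ m = 0 :=
  extension_map_eq_zero_iff k (endoToZero m) u

end EndoToZero

section MutationFunctors

variable {k : Type w} [Ring k] {C : Type u} [Category.{v} C] [Preadditive C] [Linear k C]
  [HasZeroObject C] [HasShift C ℤ] [∀ n : ℤ, (shiftFunctor C n).Additive] [Pretriangulated C]
  {A : Fin 3 ⥤ C} {f : (1 : Fin 3) ⟶ 2} {S : C}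
  {g : A.obj 2 ⟶ S} {h : S ⟶ (A.obj 1)⟦(1 : ℤ)⟧} (hT : Triangle.mk (A.map f) g h ∈ distTriang C)

include hT

lemma triangulatedClosure_mutation : triangulatedClosure ![A.obj 0, A.obj 2, S] (A.obj 1) :=
  ObjectProperty.ext_of_isTriangulatedClosed₁ _ _ hT
    (triangulatedClosure_self ![A.obj 0, A.obj 2, S] 1)
    (triangulatedClosure_self ![A.obj 0, A.obj 2, S] 2)

variable {D : Type u'} [Category.{v'} D] [Preadditive D]

lemma map_eq_zero_of_mutation (hA : IsStrongExceptional k A.obj)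
    (hb : ∀ {i j : Fin 3} (f : i ⟶ j), IsHomBasis k (A.map f)) {F : C ⥤ D} [F.Additive]
    (hF : IsZero (F.obj (A.obj 2))) (i j : Fin 3) (hij : i ≠ j)
    (φ : ![A.obj 0, A.obj 2, S] i ⟶ ![A.obj 0, A.obj 2, S] j) : F.map φ = 0 := by
  have hE := isStrongExceptional_mutation hA hb hT
  obtain hlt | hlt := lt_or_gt_of_ne hij
  · fin_cases i <;> fin_cases j <;> first | exact absurd hlt (by decide) | skip
    · exact hF.eq_of_tgt _ _
    · have hφ : φ = 0 := (homSupportedOn_mutation_right hA hb hT (homOfLE zero_le_one)).eq_zero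
        (Set.notMem_empty _) φ
      rw [hφ, F.map_zero]
    · exact hF.eq_of_src _ _
  · rw [(hE.homSupportedOn_empty hlt).eq_zero (Set.notMem_empty _) φ, F.map_zero]

lemma map_eq_zero_iff_of_mutation {F G : C ⥤ D}
    (e : TriangulatedHull.inclusion ![A.obj 0, A.obj 2, S] ⋙ F ≅
      TriangulatedHull.inclusion ![A.obj 0, A.obj 2, S] ⋙ G) (φ : A.obj 0 ⟶ A.obj 1) :
    F.map φ = 0 ↔ G.map φ = 0 :=
  map_eq_zero_iff_of_comp_iso e
    (TriangulatedHull.essImage_inclusion (triangulatedClosure_self ![A.obj 0, A.obj 2, S] 0))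
    (TriangulatedHull.essImage_inclusion (triangulatedClosure_mutation hT)) φ

variable [HasZeroObject D] [HasShift D ℤ]
  [∀ n : ℤ, (shiftFunctor D n).Additive] [Pretriangulated D] {F G : C ⥤ D}
  [F.CommShift ℤ] [F.IsTriangulated] [G.CommShift ℤ] [G.IsTriangulated]

lemma nonempty_map_iso_map_of_mutation (hF : IsZero (F.obj (A.obj 2)))
    (hG : IsZero (G.obj (A.obj 2))) (e₀ : F.obj (A.obj 0) ≅ G.obj (A.obj 0))
    (e₁ : F.obj (A.obj 1) ≅ G.obj (A.obj 1)) (i : Fin 3) :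
    Nonempty (F.obj (![A.obj 0, A.obj 2, S] i) ≅ G.obj (![A.obj 0, A.obj 2, S] i)) := by
  obtain ⟨eF⟩ := nonempty_map_obj₃_iso_shift F hT hF
  obtain ⟨eG⟩ := nonempty_map_obj₃_iso_shift G hT hG
  fin_cases i
  exacts [⟨e₀⟩, ⟨hF.iso hG⟩, ⟨eF ≪≫ (shiftFunctor D (1 : ℤ)).mapIso e₁ ≪≫ eG.symm⟩]

lemma nonempty_restriction_iso_of_mutation [Linear k D] [F.Linear k] [G.Linear k]
    (hA : IsStrongExceptional k A.obj) (hb : ∀ {i j : Fin 3} (f : i ⟶ j), IsHomBasis k (A.map f))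
    (hF : IsZero (F.obj (A.obj 2))) (hG : IsZero (G.obj (A.obj 2)))
    (e₀ : F.obj (A.obj 0) ≅ G.obj (A.obj 0)) (e₁ : F.obj (A.obj 1) ≅ G.obj (A.obj 1)) :
    let E := ![A.obj 0, A.obj 2, S]
    let 𝓐 := ObjectProperty.ι fun X ↦ ∃ i, Nonempty (X ≅ TriangulatedHull.generator E i)
    Nonempty (𝓐 ⋙ TriangulatedHull.inclusion E ⋙ F ≅ 𝓐 ⋙ TriangulatedHull.inclusion E ⋙ G) :=
  nonempty_comp_iso_comp (J := ObjectProperty.ι _ ⋙ TriangulatedHull.inclusion _)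
    (isStrongExceptional_mutation hA hb hT).exists_eq_smul_id
    (fun X ↦ TriangulatedHull.exists_nonempty_inclusion_obj_iso X.property)
    (map_eq_zero_of_mutation hT hA hb hF) (map_eq_zero_of_mutation hT hA hb hG)
    (nonempty_map_iso_map_of_mutation hT hF hG e₀ e₁)

end MutationFunctors

end

/-- **Statement 19.** There exist (`k`-linear) triangulated categories `T₁`
and `T₂`, a full subcategory `A ⊆ T₁` spanned by a full strong exceptional
sequence, and exact (triangulated) functors `F, G : T₁ → T₂` such that the
restrictions `F|_A` and `G|_A` are isomorphic functors, but `F` and `G` are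
not isomorphic as exact functors. -/
theorem statement_19 (k : Type) [Field k] :
    ∃ (T₁ T₂ : TriCat k) (n : ℕ) (Es : Fin n → T₁.C)
      (F G : T₁.C ⥤ T₂.C) (csF : F.CommShift ℤ) (csG : G.CommShift ℤ),
      F.Additive ∧ G.Additive ∧
      @Functor.IsTriangulated _ _ _ _ _ _ F csF _ _ _ _ _ _ _ _ ∧
      @Functor.IsTriangulated _ _ _ _ _ _ G csG _ _ _ _ _ _ _ _ ∧
      FullStrongExceptional k T₁ Es ∧
      Nonempty
        ((ObjectProperty.ι (fun X : T₁.C => ∃ i, Nonempty (X ≅ Es i)) ⋙ F) ≅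
         (ObjectProperty.ι (fun X : T₁.C => ∃ i, Nonempty (X ≅ Es i)) ⋙ G)) ∧
      IsEmpty (F ≅ G) := by
  let A := toLinearizationComplex k (Fin 3)
  have hA : IsStrongExceptional k A.obj := isStrongExceptional_toLinearizationComplex k
    fun _ _ hab ↦ ⟨fun f ↦ hab.not_ge (leOfHom f)⟩
  have hb {i j : Fin 3} (f : i ⟶ j) : IsHomBasis k (A.map f) :=
    isHomBasis_toLinearizationComplex_map k f
  let f : (1 : Fin 3) ⟶ 2 := homOfLE (by decide)
  obtain ⟨S, g, h, hT⟩ := distinguished_cocone_triangle (A.map f)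
  let P := (toLinearization k (Fin 3)).obj 0
  let H (m : P ⟶ P) :=
    TriangulatedHull.inclusion ![A.obj 0, A.obj 2, S] ⋙ extension k (endoToZero m)
  refine ⟨⟨TriangulatedHull ![A.obj 0, A.obj 2, S]⟩,
    ⟨HomotopyCategory (Linearization k (Fin 3)) (ComplexShape.up ℤ)⟩, 3,
    TriangulatedHull.generator _, H (𝟙 P), H 0,
    inferInstance, inferInstance, inferInstance, inferInstance, inferInstance, inferInstance,
    (isStrongExceptional_mutation hA hb hT).fullStrongExceptional_generator, ?_, ⟨fun e ↦ ?_⟩⟩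
  · exact nonempty_restriction_iso_of_mutation hT hA hb
      (isZero_extension_endoToZero_obj k (𝟙 P)) (isZero_extension_endoToZero_obj k 0)
      (extensionObjIso k (Iso.refl P)) (extensionObjIso k (Iso.refl P))
  · refine (isHomBasis_id_toLinearization_obj k (0 : Fin 3)).ne_zero ?_
    rw [← extension_endoToZero_map_eq_zero_iff k (𝟙 P) (homOfLE zero_le_one),
      map_eq_zero_iff_of_mutation hT e, extension_endoToZero_map_eq_zero_iff]

end P19
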